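/- Let k ≥ 1 and let σ be a permutation of {1,…,k}. Then the number of uncovered slope indices is at most the number of valley indices: |I_us| ≤ |I_v|. -/

import Mathlib

/-- The extension `σ̃` of a permutation `σ` of `{1,…,k}` to `{0,1,…,k+1}`, with
`σ̃(0) = 0` and `σ̃(k+1) = k+1`.  Here `σ : Equiv.Perm (Fin k)` acts on `{0,…,k-1}`,
shifted by one. -/
def sigmaTilde (k : ℕ) (σ : Equiv.Perm (Fin k)) (j : ℕ) : ℕ :=
  if h : 1 ≤ j ∧ j ≤ k then ((σ ⟨j - 1, by omega⟩ : Fin k) : ℕ) + 1 else j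

/-- The point `(j, σ(j))` is a *peak*: `σ(j) < min {σ̃(j-1), σ̃(j+1)}`. -/
def IsPeakAt (k : ℕ) (σ : Equiv.Perm (Fin k)) (j : ℕ) : Prop :=
  sigmaTilde k σ j < min (sigmaTilde k σ (j - 1)) (sigmaTilde k σ (j + 1))

/-- The point `(j, σ(j))` is a *valley*: `σ(j) > max {σ̃(j-1), σ̃(j+1)}`. -/
def IsValleyAt (k : ℕ) (σ : Equiv.Perm (Fin k)) (j : ℕ) : Prop :=
  max (sigmaTilde k σ (j - 1)) (sigmaTilde k σ (j + 1)) < sigmaTilde k σ j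

/-- The point `(j, σ(j))` is a *ladder*: `σ(j) - 1 ∈ {σ̃(j-1), σ̃(j+1)}` and the point is
not a valley. -/
def IsLadderAt (k : ℕ) (σ : Equiv.Perm (Fin k)) (j : ℕ) : Prop :=
  (sigmaTilde k σ j - 1 = sigmaTilde k σ (j - 1) ∨
    sigmaTilde k σ j - 1 = sigmaTilde k σ (j + 1)) ∧ ¬IsValleyAt k σ j

instance (k : ℕ) (σ : Equiv.Perm (Fin k)) (j : ℕ) : Decidable (IsPeakAt k σ j) := by
  unfold IsPeakAt; infer_instance

instance (k : ℕ) (σ : Equiv.Perm (Fin k)) (j : ℕ) : Decidable (IsValleyAt k σ j) := by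
  unfold IsValleyAt; infer_instance

instance (k : ℕ) (σ : Equiv.Perm (Fin k)) (j : ℕ) : Decidable (IsLadderAt k σ j) := by
  unfold IsLadderAt; infer_instance

/-- `ℓ(σ)`: the number of `j ∈ {1,…,k}` such that `(j, σ(j))` is a ladder. -/
def ladderCount (k : ℕ) (σ : Equiv.Perm (Fin k)) : ℕ :=
  ((Finset.Icc 1 k).filter fun j => IsLadderAt k σ j).card

/-- The degree of a permutation: `deg(σ) := k - ℓ(σ)`. -/
def permDegree (k : ℕ) (σ : Equiv.Perm (Fin k)) : ℕ := k - ladderCount k σ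

/-- The entries of the matrix `M(σ)`, with row and column indices `i, j ∈ {1,…,k+1}`:
`M(σ)_{ij} = 1` if `σ̃(j-1) < i ≤ σ̃(j)`, `M(σ)_{ij} = -1` if `σ̃(j) < i ≤ σ̃(j-1)`,
and `0` otherwise. -/
def MmatN (k : ℕ) (σ : Equiv.Perm (Fin k)) (i j : ℕ) : ℤ :=
  if sigmaTilde k σ (j - 1) < i ∧ i ≤ sigmaTilde k σ j then 1
  else if sigmaTilde k σ j < i ∧ i ≤ sigmaTilde k σ (j - 1) then -1
  else 0

/-- `t(j)`: the top (smallest row index) of the tower of nonzero entries in column `j`. -/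
noncomputable def towerTop (k : ℕ) (σ : Equiv.Perm (Fin k)) (j : ℕ) : ℕ :=
  sInf {i : ℕ | MmatN k σ i j ≠ 0}

/-- `b(j)`: the bottom (largest row index) of the tower of nonzero entries in column `j`. -/
noncomputable def towerBot (k : ℕ) (σ : Equiv.Perm (Fin k)) (j : ℕ) : ℕ :=
  sSup {i : ℕ | MmatN k σ i j ≠ 0}

/-- The set `I_p` of peak indices `i ∈ {1,…,k}` (the point `(σ⁻¹(i), i)` is a peak). -/
def peakSet (k : ℕ) (σ : Equiv.Perm (Fin k)) : Set ℕ :=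
  {i | 1 ≤ i ∧ i ≤ k ∧ IsPeakAt k σ (sigmaTilde k σ⁻¹ i)}

/-- The set `I_v` of valley indices `i ∈ {1,…,k}` (the point `(σ⁻¹(i), i)` is a valley). -/
def valleySet (k : ℕ) (σ : Equiv.Perm (Fin k)) : Set ℕ :=
  {i | 1 ≤ i ∧ i ≤ k ∧ IsValleyAt k σ (sigmaTilde k σ⁻¹ i)}

/-- The set `I_s` of slope indices `i ∈ {1,…,k}` (the point `(σ⁻¹(i), i)` is neither a
peak, nor a valley, nor a ladder). -/
def slopeSet (k : ℕ) (σ : Equiv.Perm (Fin k)) : Set ℕ :=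
  {i | 1 ≤ i ∧ i ≤ k ∧ ¬IsPeakAt k σ (sigmaTilde k σ⁻¹ i) ∧
    ¬IsValleyAt k σ (sigmaTilde k σ⁻¹ i) ∧ ¬IsLadderAt k σ (sigmaTilde k σ⁻¹ i)}

/-- The pivot column `c(i)`: for a non-peak index `i` this is the unique column `j` with
`b(j) = i`, except that for a valley index `i` (where both columns `σ̃⁻¹(i)` and
`σ̃⁻¹(i)+1` have bottom `i`) it is the one of these two columns with the smaller top. -/
noncomputable def pivotCol (k : ℕ) (σ : Equiv.Perm (Fin k)) (i : ℕ) : ℕ :=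
  if IsValleyAt k σ (sigmaTilde k σ⁻¹ i) then
    if towerTop k σ (sigmaTilde k σ⁻¹ i) < towerTop k σ (sigmaTilde k σ⁻¹ i + 1) then
      sigmaTilde k σ⁻¹ i
    else sigmaTilde k σ⁻¹ i + 1
  else sInf {j : ℕ | towerBot k σ j = i}

/-- The next element of `I_v ∪ I_s` strictly after `h`. -/
noncomputable def nextVS (k : ℕ) (σ : Equiv.Perm (Fin k)) (h : ℕ) : ℕ :=
  sInf {h' : ℕ | h' ∈ valleySet k σ ∪ slopeSet k σ ∧ h < h'}

/-- The set `I_cs` of covered slope indices: slope indices `h` such that there is a next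
element `h'` of `I_v ∪ I_s` after `h` and `t(c(h')) ≤ h`. -/
def coveredSlopeSet (k : ℕ) (σ : Equiv.Perm (Fin k)) : Set ℕ :=
  {h | h ∈ slopeSet k σ ∧ (∃ h' ∈ valleySet k σ ∪ slopeSet k σ, h < h') ∧
    towerTop k σ (pivotCol k σ (nextVS k σ h)) ≤ h}

/-- The set `I_us` of uncovered slope indices. -/
def uncoveredSlopeSet (k : ℕ) (σ : Equiv.Perm (Fin k)) : Set ℕ :=
  slopeSet k σ \ coveredSlopeSet k σ

section SigmaTilde

variable {k : ℕ} (σ : Equiv.Perm (Fin k))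

theorem sigmaTilde_zero : sigmaTilde k σ 0 = 0 := by
  simp [sigmaTilde]

theorem sigmaTilde_mem_Icc {j : ℕ} (h₁ : 1 ≤ j) (h₂ : j ≤ k) :
    1 ≤ sigmaTilde k σ j ∧ sigmaTilde k σ j ≤ k := by
  rw [sigmaTilde, dif_pos ⟨h₁, h₂⟩]
  have := (σ ⟨j - 1, by omega⟩).isLt
  omega

theorem sigmaTilde_inv_sigmaTilde (j : ℕ) : sigmaTilde k σ⁻¹ (sigmaTilde k σ j) = j := by
  by_cases h : 1 ≤ j ∧ j ≤ k
  · rw [sigmaTilde, dif_pos (sigmaTilde_mem_Icc σ h.1 h.2)]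
    simp only [sigmaTilde, dif_pos h, Nat.add_sub_cancel, Fin.eta, Equiv.Perm.coe_inv,
      Equiv.symm_apply_apply]
    omega
  · simp only [sigmaTilde, dif_neg h]

theorem sigmaTilde_sigmaTilde_inv (i : ℕ) : sigmaTilde k σ (sigmaTilde k σ⁻¹ i) = i := by
  simpa using sigmaTilde_inv_sigmaTilde σ⁻¹ i

theorem sigmaTilde_injective : Function.Injective (sigmaTilde k σ) :=
  Function.LeftInverse.injective (sigmaTilde_inv_sigmaTilde σ)

theorem sigmaTilde_pred_ne {j : ℕ} (hj : 1 ≤ j) :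
    sigmaTilde k σ (j - 1) ≠ sigmaTilde k σ j := fun h => by
  have := sigmaTilde_injective σ h
  omega

theorem MmatN_ne_zero_iff (i j : ℕ) : MmatN k σ i j ≠ 0 ↔
    min (sigmaTilde k σ (j - 1)) (sigmaTilde k σ j) < i ∧
      i ≤ max (sigmaTilde k σ (j - 1)) (sigmaTilde k σ j) := by
  unfold MmatN
  split_ifs <;> simp <;> omega

theorem towerTop_eq {j : ℕ} (hj : 1 ≤ j) :
    towerTop k σ j = min (sigmaTilde k σ (j - 1)) (sigmaTilde k σ j) + 1 := by
  have hne := sigmaTilde_pred_ne σ hj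
  refine IsLeast.csInf_eq ⟨(MmatN_ne_zero_iff σ _ j).2 (by omega), fun i hi => ?_⟩
  have := (MmatN_ne_zero_iff σ i j).1 hi
  omega

theorem towerBot_eq {j : ℕ} (hj : 1 ≤ j) :
    towerBot k σ j = max (sigmaTilde k σ (j - 1)) (sigmaTilde k σ j) := by
  have hne := sigmaTilde_pred_ne σ hj
  refine IsGreatest.csSup_eq ⟨(MmatN_ne_zero_iff σ _ j).2 (by omega), fun i hi => ?_⟩
  exact ((MmatN_ne_zero_iff σ i j).1 hi).2

theorem towerBot_zero : towerBot k σ 0 = 0 := by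
  have : {i : ℕ | MmatN k σ i 0 ≠ 0} = ∅ := by
    ext i
    simp only [Set.mem_ofPred_eq, MmatN_ne_zero_iff, Set.mem_empty_iff_false, iff_false]
    simp
  rw [towerBot, this]
  simp

/-- The lower endpoint of the pivot edge of a valley or slope is its smaller neighbour. -/
theorem towerTop_pivotCol {i : ℕ} (hi : i ∈ valleySet k σ ∪ slopeSet k σ) :
    towerTop k σ (pivotCol k σ i) =
      min (sigmaTilde k σ (sigmaTilde k σ⁻¹ i - 1))
        (sigmaTilde k σ (sigmaTilde k σ⁻¹ i + 1)) + 1 := by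
  have hrange : 1 ≤ i ∧ i ≤ k := by
    rcases hi with h | h <;> exact ⟨h.1, h.2.1⟩
  have hj := sigmaTilde_mem_Icc σ⁻¹ hrange.1 hrange.2
  have hji := sigmaTilde_sigmaTilde_inv σ i
  set j := sigmaTilde k σ⁻¹ i with hjdef
  have ht := towerTop_eq σ hj.1
  have ht' := towerTop_eq σ (j := j + 1) (by omega)
  have hne := sigmaTilde_pred_ne σ hj.1
  have hne' := sigmaTilde_pred_ne σ (j := j + 1) (by omega)
  simp only [Nat.add_sub_cancel] at ht' hne'
  by_cases hv : IsValleyAt k σ j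
  · rw [pivotCol, ← hjdef, if_pos hv]
    unfold IsValleyAt at hv
    split_ifs <;> omega
  · rcases hi with h | h
    · exact absurd h.2.2 hv
    have hp : ¬IsPeakAt k σ j := h.2.2.1
    unfold IsPeakAt at hp
    rw [pivotCol, ← hjdef, if_neg hv]
    unfold IsValleyAt at hv
    have hcol (c : ℕ) (hc : towerBot k σ c = i) : c = j ∨ c = j + 1 := by
      rcases Nat.eq_zero_or_pos c with rfl | hpos
      · rw [towerBot_zero] at hc
        omega
      rw [towerBot_eq σ hpos] at hc
      rcases max_choice (sigmaTilde k σ (c - 1)) (sigmaTilde k σ c) with h' | h'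
      · have := sigmaTilde_injective σ ((h'.symm.trans hc).trans hji.symm)
        omega
      · exact Or.inl (sigmaTilde_injective σ ((h'.symm.trans hc).trans hji.symm))
    have hb := towerBot_eq σ hj.1
    have hb' := towerBot_eq σ (j := j + 1) (by omega)
    simp only [Nat.add_sub_cancel] at hb'
    have hmem : towerBot k σ (sInf {c | towerBot k σ c = i}) = i := by
      refine Nat.sInf_mem (s := {c | towerBot k σ c = i}) ?_
      by_cases hlow : sigmaTilde k σ (j - 1) < sigmaTilde k σ j
      · exact ⟨j, by simp only [Set.mem_ofPred_eq]; omega⟩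
      · exact ⟨j + 1, by simp only [Set.mem_ofPred_eq]; omega⟩
    rcases hcol _ hmem with h' | h' <;> rw [h'] at hmem ⊢ <;> omega

/-- If `h` is `0` or a slope, all indices strictly between `h` and the valley or slope `n` are
peaks or ladders, and no neighbour of `n` lies below `h`, then there is a peak between `h` and
`n`: otherwise `h, h + 1, …, n - 1` would be a path, and `n` could only be joined to its end. -/
theorem exists_peak_between {h n : ℕ} (hn : n ∈ valleySet k σ ∪ slopeSet k σ)
    (hh : h = 0 ∨ h ∈ slopeSet k σ)
    (hgap : ∀ i, h < i → i < n → i ∉ valleySet k σ ∪ slopeSet k σ)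
    (hlow : h ≤ min (sigmaTilde k σ (sigmaTilde k σ⁻¹ n - 1))
      (sigmaTilde k σ (sigmaTilde k σ⁻¹ n + 1))) :
    ∃ p ∈ peakSet k σ, h < p ∧ p < n := by
  by_contra! hno
  have hrange : 1 ≤ n ∧ n ≤ k := by
    rcases hn with h' | h' <;> exact ⟨h'.1, h'.2.1⟩
  have hinv := sigmaTilde_inv_sigmaTilde σ
  have hinv' := sigmaTilde_sigmaTilde_inv σ
  have hladder (i : ℕ) (hi : h < i) (hin : i < n) :
      sigmaTilde k σ⁻¹ (i - 1) + 1 = sigmaTilde k σ⁻¹ i ∨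
        sigmaTilde k σ⁻¹ (i - 1) = sigmaTilde k σ⁻¹ i + 1 := by
    have hpos := (sigmaTilde_mem_Icc σ⁻¹ (j := i) (by omega) (by omega)).1
    have hgapi := hgap i hi hin
    have hpeak : ¬IsPeakAt k σ (sigmaTilde k σ⁻¹ i) := fun hp =>
      absurd hin (not_lt.2 (hno i ⟨by omega, by omega, hp⟩ hi))
    have hl : IsLadderAt k σ (sigmaTilde k σ⁻¹ i) := by
      by_contra hl
      by_cases hv : IsValleyAt k σ (sigmaTilde k σ⁻¹ i)
      · exact hgapi (Or.inl ⟨by omega, by omega, hv⟩)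
      · exact hgapi (Or.inr ⟨by omega, by omega, hpeak, hv, hl⟩)
    rcases hl.1 with hl | hl <;> rw [hinv' i] at hl <;> rw [hl, hinv] <;> omega
  obtain ⟨x, hhx, hxn, hadj⟩ : ∃ x, h ≤ x ∧ x + 1 < n ∧
      (sigmaTilde k σ⁻¹ x + 1 = sigmaTilde k σ⁻¹ n ∨
        sigmaTilde k σ⁻¹ x = sigmaTilde k σ⁻¹ n + 1) := by
    have hpos := (sigmaTilde_mem_Icc σ⁻¹ hrange.1 hrange.2).1
    refine ⟨_, hlow, ?_, ?_⟩
    · have hne : sigmaTilde k σ (sigmaTilde k σ⁻¹ n - 1) ≠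
          sigmaTilde k σ (sigmaTilde k σ⁻¹ n + 1) := fun he => by
        have := sigmaTilde_injective σ he
        omega
      rcases hn with hn | hn
      · have hv := hn.2.2
        unfold IsValleyAt at hv
        rw [hinv'] at hv
        omega
      · obtain ⟨-, -, hp, hv, hl⟩ := hn
        have hl' := not_or.1 fun h' => hl ⟨h', hv⟩
        have hne₁ := sigmaTilde_pred_ne σ hpos
        have hne₂ := sigmaTilde_pred_ne σ (j := sigmaTilde k σ⁻¹ n + 1) (by omega)
        unfold IsPeakAt at hp
        rw [Nat.add_sub_cancel] at hne₂
        rw [hinv'] at hp hl' hne₁ hne₂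
        omega
    · rcases min_choice (sigmaTilde k σ (sigmaTilde k σ⁻¹ n - 1))
        (sigmaTilde k σ (sigmaTilde k σ⁻¹ n + 1)) with h' | h' <;> rw [h', hinv] <;> omega
  have hup := hladder (x + 1) (by omega) hxn
  rw [Nat.add_sub_cancel] at hup
  have hne : sigmaTilde k σ⁻¹ (x + 1) ≠ sigmaTilde k σ⁻¹ n := fun he => by
    have := sigmaTilde_injective σ⁻¹ he
    omega
  rcases Nat.eq_zero_or_pos x with rfl | hxpos
  · rw [sigmaTilde_zero] at hup hadj
    omega
  obtain ⟨y, hyx, hydown⟩ : ∃ y < x, sigmaTilde k σ⁻¹ y + 1 = sigmaTilde k σ⁻¹ x ∨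
      sigmaTilde k σ⁻¹ y = sigmaTilde k σ⁻¹ x + 1 := by
    rcases hhx.lt_or_eq with hlt | rfl
    · exact ⟨x - 1, by omega, hladder x hlt (by omega)⟩
    · have hs : h ∈ slopeSet k σ := hh.resolve_left (by omega)
      obtain ⟨h1, hk, hp, -, -⟩ := hs
      have hpos := (sigmaTilde_mem_Icc σ⁻¹ h1 hk).1
      have hne₁ := sigmaTilde_pred_ne σ hpos
      have hne₂ := sigmaTilde_pred_ne σ (j := sigmaTilde k σ⁻¹ h + 1) (by omega)
      unfold IsPeakAt at hp
      rw [Nat.add_sub_cancel] at hne₂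
      rw [hinv'] at hp hne₁ hne₂
      by_cases hc : sigmaTilde k σ (sigmaTilde k σ⁻¹ h - 1) < h
      · exact ⟨_, hc, by rw [hinv]; omega⟩
      · exact ⟨sigmaTilde k σ (sigmaTilde k σ⁻¹ h + 1), by omega, by rw [hinv]; omega⟩
  have hne₁ : sigmaTilde k σ⁻¹ y ≠ sigmaTilde k σ⁻¹ n := fun he => by
    have := sigmaTilde_injective σ⁻¹ he
    omega
  have hne₂ : sigmaTilde k σ⁻¹ y ≠ sigmaTilde k σ⁻¹ (x + 1) := fun he => by
    have := sigmaTilde_injective σ⁻¹ he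
    omega
  omega

/-- Peaks and valleys alternate, beginning with a valley. -/
theorem card_valleys_eq_card_peaks_add (n : ℕ) :
    ((Finset.Icc 1 n).filter fun j => IsValleyAt k σ j).card =
      ((Finset.Icc 1 n).filter fun j => IsPeakAt k σ j).card +
        if sigmaTilde k σ (n + 1) < sigmaTilde k σ n then 1 else 0 := by
  induction n with
  | zero => simp [sigmaTilde_zero]
  | succ n ih =>
    have hne₁ := sigmaTilde_pred_ne σ (j := n + 1) (by omega)
    have hne₂ := sigmaTilde_pred_ne σ (j := n + 1 + 1) (by omega)
    rw [Nat.add_sub_cancel] at hne₁ hne₂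
    simp only [Finset.card_filter] at ih ⊢
    rw [Finset.sum_Icc_succ_top (by omega), Finset.sum_Icc_succ_top (by omega), ih]
    simp only [IsValleyAt, IsPeakAt, Nat.add_sub_cancel]
    split_ifs <;> omega

theorem ncard_setOf_sigmaTilde_inv (P : ℕ → Prop) [DecidablePred P] :
    {i | 1 ≤ i ∧ i ≤ k ∧ P (sigmaTilde k σ⁻¹ i)}.ncard = ((Finset.Icc 1 k).filter P).card := by
  rw [← Finset.card_image_of_injective _ (sigmaTilde_injective σ), ← Set.ncard_coe_finset]
  congr 1
  ext i
  simp only [Set.mem_ofPred_eq, Finset.coe_image, Finset.coe_filter, Finset.mem_Icc, Set.mem_image]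
  constructor
  · rintro ⟨h₁, h₂, hP⟩
    exact ⟨_, ⟨sigmaTilde_mem_Icc σ⁻¹ h₁ h₂, hP⟩, sigmaTilde_sigmaTilde_inv σ i⟩
  · rintro ⟨j, ⟨⟨h₁, h₂⟩, hP⟩, rfl⟩
    have := sigmaTilde_mem_Icc σ h₁ h₂
    exact ⟨this.1, this.2, by rwa [sigmaTilde_inv_sigmaTilde]⟩

theorem ncard_peakSet_le_ncard_valleySet :
    (peakSet k σ).ncard ≤ (valleySet k σ).ncard := by
  rw [peakSet, valleySet, ncard_setOf_sigmaTilde_inv, ncard_setOf_sigmaTilde_inv,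
    card_valleys_eq_card_peaks_add]
  exact Nat.le_add_right _ _

theorem peakSet_finite : (peakSet k σ).Finite :=
  (Set.finite_Icc 1 k).subset fun _ hi => ⟨hi.1, hi.2.1⟩

theorem uncoveredSlopeSet_finite : (uncoveredSlopeSet k σ).Finite :=
  (Set.finite_Icc 1 k).subset fun _ hi => ⟨hi.1.1, hi.1.2.1⟩

theorem exists_peak_lt_nextVS {h m : ℕ} (hh : h = 0 ∨ h ∈ uncoveredSlopeSet k σ)
    (hm : m ∈ valleySet k σ ∪ slopeSet k σ) (hhm : h < m) :
    ∃ p ∈ peakSet k σ, h < p ∧ p < nextVS k σ h := by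
  have hnext : nextVS k σ h ∈ valleySet k σ ∪ slopeSet k σ ∧ h < nextVS k σ h :=
    Nat.sInf_mem (s := {h' | h' ∈ valleySet k σ ∪ slopeSet k σ ∧ h < h'}) ⟨m, hm, hhm⟩
  refine exists_peak_between σ hnext.1 (hh.imp_right And.left)
    (fun i hi hin hmem => Nat.notMem_of_lt_sInf hin ⟨hmem, hi⟩) ?_
  rcases hh with rfl | hu
  · exact Nat.zero_le _
  · by_contra hlt
    refine hu.2 ⟨hu.1, ⟨m, hm, hhm⟩, ?_⟩
    rw [towerTop_pivotCol σ hnext.1]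
    omega

end SigmaTilde

/-- The paper's Lemma 8.4: for every permutation `σ` of `{1,…,k}`, the number of
uncovered slope indices is at most the number of valley indices, `|I_us| ≤ |I_v|`. -/
theorem card_uncoveredSlopes_le_card_valleys
    (k : ℕ) (hk : 1 ≤ k) (σ : Equiv.Perm (Fin k)) :
    (uncoveredSlopeSet k σ).ncard ≤ (valleySet k σ).ncard := by
  rcases (uncoveredSlopeSet k σ).eq_empty_or_nonempty with hempty | hne
  · simp [hempty]
  refine le_trans ?_ (ncard_peakSet_le_ncard_valleySet σ)
  obtain ⟨M, hM, hmax⟩ := Set.exists_max_image _ id (uncoveredSlopeSet_finite σ) hne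
  have hzero : 0 ∉ uncoveredSlopeSet k σ := fun h => absurd h.1.1 (by omega)
  rw [← Set.ncard_exchange hzero hM]
  have hpeak : ∀ h ∈ insert 0 (uncoveredSlopeSet k σ \ {M}),
      ∃ p ∈ peakSet k σ, h < p ∧ p < nextVS k σ h := by
    rintro h (rfl | ⟨hu, hhM⟩)
    · exact exists_peak_lt_nextVS σ (Or.inl rfl) (Or.inr hM.1) hM.1.1
    · exact exists_peak_lt_nextVS σ (Or.inr hu) (Or.inr hM.1) (lt_of_le_of_ne (hmax h hu) hhM)
  choose! p hp hlt hnext using hpeak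
  have hmono : StrictMonoOn p (insert 0 (uncoveredSlopeSet k σ \ {M})) := by
    intro a ha b hb hab
    have hb' : b ∈ slopeSet k σ := (hb.resolve_left (by omega)).1.1
    have hle : nextVS k σ a ≤ b := Nat.sInf_le ⟨Or.inr hb', hab⟩
    exact ((hnext a ha).trans_le hle).trans (hlt b hb)
  exact Set.ncard_le_ncard_of_injOn p hp hmono.injOn (peakSet_finite σ)
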